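/- Let A be a graded algebra that is extremal. Then A is a prime ring: for all a, b ∈ A, if a·x·b = 0 for every x ∈ A, then a = 0 or b = 0. -/

import Mathlib

open scoped ENNReal NNReal
open PowerSeries

noncomputable section

/-- The degree-`n` homogeneous component of the free algebra `k⟨X⟩`
(standard grading: each generator has degree 1). -/
def freeDeg (k : Type) [Field k] (X : Type) (n : ℕ) : Submodule k (FreeAlgebra k X) :=
  (Submodule.span k (Set.range (FreeAlgebra.ι k)) : Submodule k (FreeAlgebra k X)) ^ n

/-- The two-sided ideal generated by a set `S`, as a `k`-submodule. -/
def idealGen (k : Type) [Field k] {A : Type} [Ring A] [Algebra k A] (S : Set A) :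
    Submodule k A :=
  Submodule.span k {x : A | ∃ a b : A, ∃ s ∈ S, x = a * s * b}

/-- The dimension of the `n`-th component of the quotient of a graded algebra
(with components `𝒜`) by a homogeneous ideal `I`, i.e. `dim (𝒜 n / (I ∩ 𝒜 n))`. -/
def quotDim (k : Type) [Field k] {A : Type} [Ring A] [Algebra k A]
    (𝒜 : ℕ → Submodule k A) (I : Submodule k A) (n : ℕ) : ℕ :=
  Module.finrank k (↥(𝒜 n) ⧸ (I.comap (𝒜 n).subtype))

/-- The radius of convergence of the power series `Σ a_n t^n`, as an element of `[0,∞]`. -/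
def hradius (a : ℕ → ℝ) : ℝ≥0∞ :=
  ⨆ (r : ℝ≥0) (_ : Summable fun n => |a n| * (r : ℝ) ^ n), (r : ℝ≥0∞)

end
noncomputable section

/-- A `k`-submodule which is a two-sided ideal. -/
def IsTwoSidedSub {k A : Type} [Field k] [Ring A] [Algebra k A] (I : Submodule k A) : Prop :=
  ∀ a : A, ∀ x ∈ I, a * x ∈ I ∧ x * a ∈ I

/-- A submodule is homogeneous (w.r.t. the grading `𝒜`) if it is closed under taking
homogeneous components. -/
def IsHomogSub {k A : Type} [Field k] [Ring A] [Algebra k A]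
    (𝒜 : ℕ → Submodule k A) [GradedAlgebra 𝒜] (I : Submodule k A) : Prop :=
  ∀ x ∈ I, ∀ n, (DirectSum.decompose 𝒜 x n : A) ∈ I

/-- A graded algebra is extremal if every quotient by a nonzero homogeneous two-sided
ideal has strictly larger radius of convergence of its Hilbert series. -/
def Extremal {k A : Type} [Field k] [Ring A] [Algebra k A]
    (𝒜 : ℕ → Submodule k A) [GradedAlgebra 𝒜] : Prop :=
  ∀ I : Submodule k A, IsTwoSidedSub I → IsHomogSub 𝒜 I → I ≠ ⊥ →
    hradius (fun n => (Module.finrank k (𝒜 n) : ℝ)) <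
      hradius (fun n => (quotDim k 𝒜 I n : ℝ))

end

/-!
Let `a` be homogeneous of degree `p` and let `J` satisfy `J a = a J = 0`. The map `x ⊗ y ↦ x a y`
factors through `A/J ⊗ A/J` and surjects onto the ideal `(a)`, so coefficientwise
`H_A ≤ H_{A/(a)} + t^p H_{A/J}²`, and therefore `min (r(A/(a))) (r(A/J)) ≤ r(A)`. With `J = (b)`
this contradicts extremality whenever `a, b ≠ 0` are homogeneous and `a A b = b A a = 0`. If only
`a A b = 0`, then for homogeneous `x` the element `c = b x a` satisfies `c A c = 0`, hence `c = 0`,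
so that `b A a = 0` as well. For arbitrary `a` and `b`, pass to their lowest-degree components.
-/

section Hradius

open Finset.HasAntidiagonal (antidiagonal mem_antidiagonal)

theorem lt_hradius_iff {a : ℕ → ℝ} {x : ℝ≥0∞} :
    x < hradius a ↔ ∃ r : ℝ≥0, x < r ∧ Summable fun n => |a n| * (r : ℝ) ^ n := by
  simp only [hradius, lt_iSup_iff, exists_prop, and_comm]

theorem le_hradius_of_summable {a : ℕ → ℝ} {r : ℝ≥0}
    (h : Summable fun n => |a n| * (r : ℝ) ^ n) : (r : ℝ≥0∞) ≤ hradius a :=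
  le_iSup₂_of_le r h le_rfl

theorem summable_of_lt_hradius {a : ℕ → ℝ} {r : ℝ≥0} (h : (r : ℝ≥0∞) < hradius a) :
    Summable fun n => |a n| * (r : ℝ) ^ n := by
  obtain ⟨s, hrs, hs⟩ := lt_hradius_iff.mp h
  have hrs : r ≤ s := (ENNReal.coe_lt_coe.mp hrs).le
  exact hs.of_nonneg_of_le (fun n => by positivity) fun n => by gcongr

theorem hradius_anti {a b : ℕ → ℝ} (h : ∀ n, |a n| ≤ |b n|) : hradius b ≤ hradius a :=
  ENNReal.le_of_forall_nnreal_lt fun _ hr =>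
    le_hradius_of_summable <| (summable_of_lt_hradius hr).of_nonneg_of_le
      (fun _ => by positivity) fun n => by gcongr ?_ * _; exact h n

theorem min_hradius_le_hradius_add (f g : ℝ⟦X⟧) :
    min (hradius (coeff · f)) (hradius (coeff · g)) ≤ hradius (coeff · (f + g)) := by
  refine ENNReal.le_of_forall_nnreal_lt fun r hr => le_hradius_of_summable ?_
  obtain ⟨hf, hg⟩ := lt_min_iff.mp hr
  refine ((summable_of_lt_hradius hf).add (summable_of_lt_hradius hg)).of_nonneg_of_le
    (fun n => by positivity) fun n => ?_
  rw [map_add, ← add_mul]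
  gcongr
  exact abs_add_le _ _

theorem min_hradius_le_hradius_mul (f g : ℝ⟦X⟧) :
    min (hradius (coeff · f)) (hradius (coeff · g)) ≤ hradius (coeff · (f * g)) := by
  refine ENNReal.le_of_forall_nnreal_lt fun r hr => le_hradius_of_summable ?_
  obtain ⟨hf, hg⟩ := lt_min_iff.mp hr
  let F (φ : ℝ⟦X⟧) (n : ℕ) : ℝ := |coeff n φ| * (r : ℝ) ^ n
  have hF (φ : ℝ⟦X⟧) : 0 ≤ F φ := fun n => mul_nonneg (abs_nonneg _) (pow_nonneg r.coe_nonneg n)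
  have hprod : Summable fun x : ℕ × ℕ => F f x.1 * F g x.2 :=
    (summable_of_lt_hradius hf).mul_of_nonneg (summable_of_lt_hradius hg) (hF f) (hF g)
  refine (summable_sum_mul_antidiagonal_of_summable_mul hprod).of_nonneg_of_le
    (hF (f * g)) fun n => ?_
  calc |coeff n (f * g)| * (r : ℝ) ^ n
      ≤ (∑ ij ∈ antidiagonal n, |coeff ij.1 f * coeff ij.2 g|) * (r : ℝ) ^ n := by
        rw [coeff_mul]
        gcongr
        exact Finset.abs_sum_le_sum_abs _ _
    _ = ∑ ij ∈ antidiagonal n, F f ij.1 * F g ij.2 := by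
        rw [Finset.sum_mul]
        refine Finset.sum_congr rfl fun ij hij => ?_
        rw [← mem_antidiagonal.mp hij, abs_mul, pow_add, mul_mul_mul_comm]

theorem hradius_X_pow (p : ℕ) : hradius (coeff · (X ^ p : ℝ⟦X⟧)) = ⊤ := by
  refine ENNReal.eq_top_of_forall_nnreal_le fun r => le_hradius_of_summable ?_
  refine summable_of_ne_finset_zero (s := {p}) fun n hn => ?_
  rw [coeff_X_pow, if_neg (Finset.notMem_singleton.mp hn), abs_zero, zero_mul]

end Hradius

section FiniteRank

variable {k : Type*} [Field k]

theorem finrank_finset_sup_le {ι M : Type*} [AddCommGroup M] [Module k M] (s : Finset ι)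
    (V : ι → Submodule k M) [∀ i, FiniteDimensional k (V i)] :
    Module.finrank k ↥(s.sup V) ≤ ∑ i ∈ s, Module.finrank k (V i) := by
  classical
  induction s using Finset.induction_on with
  | empty => simp
  | insert i s hi ih =>
    rw [Finset.sup_insert, Finset.sum_insert hi]
    exact (Submodule.finrank_add_le_finrank_add_finrank _ _).trans (by gcongr)

theorem finrank_map₂_le_of_le_ker {M N P : Type*} [AddCommGroup M] [Module k M] [AddCommGroup N]
    [Module k N] [AddCommGroup P] [Module k P] (f : M →ₗ[k] N →ₗ[k] P) (V I : Submodule k M)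
    (W J : Submodule k N) [FiniteDimensional k V] [FiniteDimensional k W]
    (hI : I ≤ LinearMap.ker f) (hJ : J ≤ LinearMap.ker f.flip) :
    Module.finrank k (Submodule.map₂ f V W) ≤
      Module.finrank k (V ⧸ I.comap V.subtype) * Module.finrank k (W ⧸ J.comap W.subtype) := by
  let g := (f.domRestrict₁₂ V W).liftQ₂ (I.comap V.subtype) (J.comap W.subtype)
    (fun x hx => LinearMap.ext fun y => LinearMap.congr_fun (hI hx) (y : N))
    (fun y hy => LinearMap.ext fun x => LinearMap.congr_fun (hJ hy) (x : M))
  have hle : Submodule.map₂ f V W ≤ LinearMap.range (TensorProduct.lift g) :=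
    Submodule.map₂_le.mpr fun x hx y hy =>
      ⟨Submodule.Quotient.mk ⟨x, hx⟩ ⊗ₜ[k] Submodule.Quotient.mk ⟨y, hy⟩, rfl⟩
  calc Module.finrank k (Submodule.map₂ f V W)
      ≤ Module.finrank k (LinearMap.range (TensorProduct.lift g)) := Submodule.finrank_mono hle
    _ ≤ Module.finrank k (TensorProduct k (V ⧸ I.comap V.subtype) (W ⧸ J.comap W.subtype)) :=
        LinearMap.finrank_range_le _
    _ = _ := Module.finrank_tensorProduct

theorem finrank_mul_span_singleton_mul_le {A : Type*} [Ring A] [Algebra k A] (V W : Submodule k A)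
    [FiniteDimensional k V] [FiniteDimensional k W] {a : A} {J : Submodule k A}
    (hJa : ∀ z ∈ J, z * a = 0) (haJ : ∀ z ∈ J, a * z = 0) :
    Module.finrank k ↥(V * Submodule.span k {a} * W) ≤
      Module.finrank k (V ⧸ J.comap V.subtype) * Module.finrank k (W ⧸ J.comap W.subtype) := by
  let f : A →ₗ[k] A →ₗ[k] A := LinearMap.mul k A ∘ₗ LinearMap.mulRight k a
  have hf : V * Submodule.span k {a} * W = Submodule.map₂ f V W := by
    refine le_antisymm ?_ ?_
    · refine Submodule.mul_le.mpr fun u hu w hw => ?_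
      obtain ⟨v, hv, rfl⟩ := Submodule.mem_mul_span_singleton.mp hu
      exact Submodule.apply_mem_map₂ f hv hw
    · exact Submodule.map₂_le.mpr fun v hv w hw =>
        Submodule.mul_mem_mul (Submodule.mul_mem_mul hv (Submodule.mem_span_singleton_self a)) hw
  rw [hf]
  refine finrank_map₂_le_of_le_ker f V J W J (fun z hz => LinearMap.ext fun y => ?_)
    (fun z hz => LinearMap.ext fun x => ?_)
  · simp [f, hJa z hz]
  · simp [f, mul_assoc, haJ z hz]

end FiniteRank

section IdealGen

variable {k A : Type} [Field k] [Ring A] [Algebra k A]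

theorem idealGen_eq_top_mul_span_mul_top (S : Set A) :
    idealGen k S = ⊤ * Submodule.span k S * ⊤ := by
  rw [← Submodule.span_univ, Submodule.span_mul_span, Submodule.span_mul_span, idealGen]
  congr 1
  ext x
  constructor
  · rintro ⟨y, z, s, hs, rfl⟩
    exact Set.mul_mem_mul (Set.mul_mem_mul (Set.mem_univ y) hs) (Set.mem_univ z)
  · rintro ⟨_, ⟨y, -, s, hs, rfl⟩, z, -, rfl⟩
    exact ⟨y, z, s, hs, rfl⟩

theorem subset_idealGen (S : Set A) : S ⊆ idealGen k S :=
  fun s hs => Submodule.subset_span ⟨1, 1, s, hs, by simp⟩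

theorem isTwoSidedSub_idealGen (S : Set A) : IsTwoSidedSub (idealGen k S) := by
  have top_mul_top : (⊤ : Submodule k A) * ⊤ = ⊤ :=
    top_le_iff.mp fun x hx => mul_one x ▸ Submodule.mul_mem_mul hx Submodule.mem_top
  rw [idealGen_eq_top_mul_span_mul_top]
  refine fun a x hx => ⟨?_, ?_⟩
  · simpa only [← mul_assoc, top_mul_top] using
      Submodule.mul_mem_mul (Submodule.mem_top (x := a)) hx
  · simpa only [mul_assoc, top_mul_top] using
      Submodule.mul_mem_mul hx (Submodule.mem_top (x := a))

theorem mul_eq_zero_of_mem_idealGen_left {S : Set A} {a z : A} (h : ∀ s ∈ S, ∀ x, s * x * a = 0)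
    (hz : z ∈ idealGen k S) : z * a = 0 := by
  suffices idealGen k S ≤ LinearMap.ker (LinearMap.mulRight k a) from this hz
  refine Submodule.span_le.mpr ?_
  rintro _ ⟨x, y, s, hs, rfl⟩
  simp [mul_assoc x, h s hs]

theorem mul_eq_zero_of_mem_idealGen_right {S : Set A} {a z : A} (h : ∀ s ∈ S, ∀ x, a * x * s = 0)
    (hz : z ∈ idealGen k S) : a * z = 0 := by
  suffices idealGen k S ≤ LinearMap.ker (LinearMap.mulLeft k a) from this hz
  refine Submodule.span_le.mpr ?_
  rintro _ ⟨x, y, s, hs, rfl⟩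
  simp [← mul_assoc, h s hs]

variable (𝒜 : ℕ → Submodule k A) [GradedAlgebra 𝒜]

theorem decompose_mem_of_mem_idealGen_singleton {a z : A} {p n : ℕ} (ha : a ∈ 𝒜 p)
    (hz : z ∈ idealGen k {a}) {W : Submodule k A}
    (hW : ∀ i j, i + p + j = n → 𝒜 i * Submodule.span k {a} * 𝒜 j ≤ W) :
    (DirectSum.decompose 𝒜 z n : A) ∈ W := by
  suffices idealGen k {a} ≤ W.comap (GradedAlgebra.proj 𝒜 n) from this hz
  rw [idealGen_eq_top_mul_span_mul_top,
    ← (DirectSum.Decomposition.isInternal 𝒜).submodule_iSup_eq_top]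
  simp only [Submodule.iSup_mul, Submodule.mul_iSup, iSup_le_iff]
  intro j i w hw
  have hdeg : w ∈ 𝒜 (i + p + j) := by
    refine Submodule.mul_le.mpr (fun u hu y hy => ?_) hw
    obtain ⟨x, hx, rfl⟩ := Submodule.mem_mul_span_singleton.mp hu
    exact SetLike.mul_mem_graded (SetLike.mul_mem_graded hx ha) hy
  rw [Submodule.mem_comap, GradedAlgebra.proj_apply]
  by_cases hn : i + p + j = n
  · rw [DirectSum.decompose_of_mem_same 𝒜 (hn ▸ hdeg)]
    exact hW i j hn hw
  · rw [DirectSum.decompose_of_mem_ne 𝒜 hdeg hn]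
    exact W.zero_mem

theorem idealGen_singleton_comap_eq_bot {a : A} {p n : ℕ} (ha : a ∈ 𝒜 p) (hn : n < p) :
    (idealGen k {a}).comap (𝒜 n).subtype = ⊥ := by
  refine (Submodule.eq_bot_iff _).mpr fun z hz => Subtype.ext ?_
  rw [← DirectSum.decompose_of_mem_same 𝒜 z.2]
  exact decompose_mem_of_mem_idealGen_singleton 𝒜 ha hz (W := ⊥) fun i j hij => by lia

theorem isHomogSub_idealGen_singleton {a : A} {p : ℕ} (ha : a ∈ 𝒜 p) :
    IsHomogSub 𝒜 (idealGen k {a}) := by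
  refine fun z hz n => decompose_mem_of_mem_idealGen_singleton 𝒜 ha hz fun i j _ => ?_
  rw [idealGen_eq_top_mul_span_mul_top]
  gcongr <;> exact le_top

end IdealGen

section Counting

open Finset.HasAntidiagonal (antidiagonal mem_antidiagonal)

/-- The Hilbert series of the quotient of the graded algebra `A` (with components `𝒜`) by a
homogeneous ideal `I`, with real coefficients so that `hradius` applies to them. -/
noncomputable def quotHilbertSeries (k : Type) [Field k] {A : Type} [Ring A] [Algebra k A]
    (𝒜 : ℕ → Submodule k A) (I : Submodule k A) : ℝ⟦X⟧ :=
  mk fun n => (quotDim k 𝒜 I n : ℝ)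

variable {k A : Type} [Field k] [Ring A] [Algebra k A] {𝒜 : ℕ → Submodule k A} [GradedAlgebra 𝒜]
  [∀ n, FiniteDimensional k (𝒜 n)] {a : A} {p : ℕ} {J : Submodule k A}

theorem finrank_comap_idealGen_singleton_le (ha : a ∈ 𝒜 p) (hJa : ∀ z ∈ J, z * a = 0)
    (haJ : ∀ z ∈ J, a * z = 0) (m : ℕ) :
    Module.finrank k ((idealGen k {a}).comap (𝒜 (m + p)).subtype) ≤
      ∑ ij ∈ antidiagonal m, quotDim k 𝒜 J ij.1 * quotDim k 𝒜 J ij.2 := by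
  let V (ij : ℕ × ℕ) : Submodule k A := 𝒜 ij.1 * Submodule.span k {a} * 𝒜 ij.2
  have hV (ij : ℕ × ℕ) : FiniteDimensional k (V ij) :=
    Module.Finite.iff_fg.mpr <|
      ((Module.Finite.iff_fg.mp inferInstance).mul (Submodule.fg_span_singleton a)).mul
        (Module.Finite.iff_fg.mp inferInstance)
  have hle : ((idealGen k {a}).comap (𝒜 (m + p)).subtype).map (𝒜 (m + p)).subtype ≤
      (antidiagonal m).sup V := by
    rintro _ ⟨⟨z, hzn⟩, hz, rfl⟩
    suffices (DirectSum.decompose 𝒜 z (m + p) : A) ∈ (antidiagonal m).sup V by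
      rwa [DirectSum.decompose_of_mem_same 𝒜 hzn] at this
    refine decompose_mem_of_mem_idealGen_singleton 𝒜 ha hz fun i j hij => ?_
    exact Finset.le_sup (f := V) (b := (i, j)) (mem_antidiagonal.mpr (by lia))
  calc _ = Module.finrank k (((idealGen k {a}).comap (𝒜 (m + p)).subtype).map
          (𝒜 (m + p)).subtype) := (Submodule.finrank_map_subtype_eq _ _).symm
    _ ≤ Module.finrank k ↥((antidiagonal m).sup V) := Submodule.finrank_mono hle
    _ ≤ ∑ ij ∈ antidiagonal m, Module.finrank k (V ij) := finrank_finset_sup_le _ _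
    _ ≤ _ := Finset.sum_le_sum fun ij _ => finrank_mul_span_singleton_mul_le _ _ hJa haJ

theorem finrank_le_coeff_quotHilbertSeries (ha : a ∈ 𝒜 p) (hJa : ∀ z ∈ J, z * a = 0)
    (haJ : ∀ z ∈ J, a * z = 0) (n : ℕ) :
    (Module.finrank k (𝒜 n) : ℝ) ≤ coeff n (quotHilbertSeries k 𝒜 (idealGen k {a}) +
      X ^ p * (quotHilbertSeries k 𝒜 J * quotHilbertSeries k 𝒜 J)) := by
  have hrank : Module.finrank k (𝒜 n) = quotDim k 𝒜 (idealGen k {a}) n +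
      Module.finrank k ((idealGen k {a}).comap (𝒜 n).subtype) :=
    (Submodule.finrank_quotient_add_finrank _).symm
  rw [hrank, Nat.cast_add, map_add, quotHilbertSeries, coeff_mk]
  gcongr
  rcases lt_or_ge n p with hn | hn
  · rw [idealGen_singleton_comap_eq_bot 𝒜 ha hn, coeff_X_pow_mul', if_neg hn.not_ge, finrank_bot,
      Nat.cast_zero]
  · obtain ⟨m, rfl⟩ := Nat.exists_eq_add_of_le' hn
    rw [coeff_X_pow_mul, coeff_mul]
    simp only [quotHilbertSeries, coeff_mk]
    exact_mod_cast finrank_comap_idealGen_singleton_le ha hJa haJ m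

theorem min_hradius_quotDim_le (ha : a ∈ 𝒜 p) (hJa : ∀ z ∈ J, z * a = 0)
    (haJ : ∀ z ∈ J, a * z = 0) :
    min (hradius fun n => (quotDim k 𝒜 (idealGen k {a}) n : ℝ))
        (hradius fun n => (quotDim k 𝒜 J n : ℝ)) ≤
      hradius fun n => (Module.finrank k (𝒜 n) : ℝ) := by
  let Q (I : Submodule k A) : ℝ⟦X⟧ := quotHilbertSeries k 𝒜 I
  have hQ (I : Submodule k A) :
      (hradius fun n => (quotDim k 𝒜 I n : ℝ)) = hradius (coeff · (Q I)) := by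
    simp only [Q, quotHilbertSeries, coeff_mk]
  have hshift : hradius (coeff · (Q J)) ≤ hradius (coeff · (X ^ p * (Q J * Q J))) :=
    calc hradius (coeff · (Q J))
        ≤ hradius (coeff · (Q J * Q J)) := by
          simpa only [min_self] using min_hradius_le_hradius_mul (Q J) (Q J)
      _ ≤ hradius (coeff · (X ^ p * (Q J * Q J))) := by
          have h := min_hradius_le_hradius_mul (X ^ p) (Q J * Q J)
          rwa [hradius_X_pow, min_top_left] at h
  rw [hQ, hQ]
  calc min (hradius (coeff · (Q (idealGen k {a})))) (hradius (coeff · (Q J)))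
      ≤ hradius (coeff · (Q (idealGen k {a}) + X ^ p * (Q J * Q J))) :=
        (min_le_min_left _ hshift).trans (min_hradius_le_hradius_add _ _)
    _ ≤ hradius fun n => (Module.finrank k (𝒜 n) : ℝ) := hradius_anti fun n => by
        rw [Nat.abs_cast]
        exact (finrank_le_coeff_quotHilbertSeries ha hJa haJ n).trans (le_abs_self _)

end Counting

section Graded

theorem exists_decompose_ne_zero_forall_lt {ι σ M : Type*} [LinearOrder ι] [AddCommMonoid M]
    [SetLike σ M] [AddSubmonoidClass σ M] (ℳ : ι → σ) [DirectSum.Decomposition ℳ] {a : M}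
    (ha : a ≠ 0) :
    ∃ m, DirectSum.decompose ℳ a m ≠ 0 ∧ ∀ i < m, DirectSum.decompose ℳ a i = 0 := by
  classical
  have hne : (DirectSum.decompose ℳ a).support.Nonempty := by
    rw [Finset.nonempty_iff_ne_empty, Ne, DFinsupp.support_eq_empty]
    exact mt (DirectSum.decomposeAddEquiv ℳ).map_eq_zero_iff.mp ha
  refine ⟨_, DFinsupp.mem_support_iff.mp (Finset.min'_mem _ hne), fun i hi => ?_⟩
  exact DFinsupp.notMem_support_iff.mp fun h => (Finset.min'_le _ i h).not_gt hi

variable {ι σ A : Type*} [Semiring A] [SetLike σ A] [AddSubmonoidClass σ A] [AddCommMonoid ι]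
  [LinearOrder ι] [IsOrderedCancelAddMonoid ι] (𝒜 : ι → σ) [GradedRing 𝒜]

theorem coe_decompose_mul_add_of_forall_lt {a b : A} {m n : ι}
    (ha : ∀ i < m, DirectSum.decompose 𝒜 a i = 0) (hb : ∀ j < n, DirectSum.decompose 𝒜 b j = 0) :
    (DirectSum.decompose 𝒜 (a * b) (m + n) : A) =
      DirectSum.decompose 𝒜 a m * DirectSum.decompose 𝒜 b n := by
  classical
  rw [DirectSum.decompose_mul, DirectSum.coe_mul_apply]
  refine Finset.sum_eq_single (m, n) (fun ij hij hne => ?_) (fun h => ?_)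
  · have hsum : ij.1 + ij.2 = m + n := (Finset.mem_filter.mp hij).2
    rcases lt_trichotomy ij.1 m with hlt | heq | hgt
    · rw [ha _ hlt, ZeroMemClass.coe_zero, zero_mul]
    · exact absurd (Prod.ext heq (by simpa [heq] using hsum)) hne
    · have hlt : ij.2 < n := lt_of_not_ge fun hge => (add_lt_add_of_lt_of_le hgt hge).ne' hsum
      rw [hb _ hlt, ZeroMemClass.coe_zero, mul_zero]
  · simp only [Finset.mem_filter, Finset.mem_product, DFinsupp.mem_support_iff, and_true,
      not_and_or, not_not] at h
    rcases h with h | h <;> simp [h]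

theorem eq_zero_or_eq_zero_of_homogeneous
    (h : ∀ a b, SetLike.IsHomogeneousElem 𝒜 a → SetLike.IsHomogeneousElem 𝒜 b →
      (∀ x, a * x * b = 0) → a = 0 ∨ b = 0) {a b : A} (hab : ∀ x, a * x * b = 0) :
    a = 0 ∨ b = 0 := by
  by_contra! hne
  obtain ⟨m, hm, ham⟩ := exists_decompose_ne_zero_forall_lt 𝒜 hne.1
  obtain ⟨n, hn, hbn⟩ := exists_decompose_ne_zero_forall_lt 𝒜 hne.2
  have hmn (x : A) : (DirectSum.decompose 𝒜 a m : A) * x * DirectSum.decompose 𝒜 b n = 0 := by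
    induction x using DirectSum.Decomposition.inductionOn 𝒜 with
    | zero => rw [mul_zero, zero_mul]
    | add x y hx hy => rw [mul_add, add_mul, hx, hy, add_zero]
    | @homogeneous i x =>
      have hx : ∀ j < i, DirectSum.decompose 𝒜 (x : A) j = 0 := fun j hj =>
        Subtype.ext (DirectSum.decompose_of_mem_ne 𝒜 x.2 hj.ne')
      have hax : ∀ j < m + i, DirectSum.decompose 𝒜 (a * x) j = 0 := by
        rw [DirectSum.decompose_mul]
        exact mul_apply_eq_zero ham hx
      calc (DirectSum.decompose 𝒜 a m : A) * x * DirectSum.decompose 𝒜 b n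
          = DirectSum.decompose 𝒜 (a * x * b) (m + i + n) := by
            rw [coe_decompose_mul_add_of_forall_lt 𝒜 hax hbn,
              coe_decompose_mul_add_of_forall_lt 𝒜 ham hx, DirectSum.decompose_coe,
              DirectSum.of_eq_same]
        _ = 0 := by rw [hab, DirectSum.decompose_zero, DirectSum.zero_apply, ZeroMemClass.coe_zero]
  rcases h _ _ ⟨m, SetLike.coe_mem _⟩ ⟨n, SetLike.coe_mem _⟩ hmn with ha | hb
  · exact hm (Subtype.ext ha)
  · exact hn (Subtype.ext hb)

end Graded

namespace Extremal

variable {k A : Type} [Field k] [Ring A] [Algebra k A] {𝒜 : ℕ → Submodule k A} [GradedAlgebra 𝒜]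
  {a b : A}

theorem hradius_lt_hradius_quotDim_idealGen (hext : Extremal 𝒜)
    (ha : SetLike.IsHomogeneousElem 𝒜 a) (ha0 : a ≠ 0) :
    hradius (fun n => (Module.finrank k (𝒜 n) : ℝ)) <
      hradius (fun n => (quotDim k 𝒜 (idealGen k {a}) n : ℝ)) := by
  obtain ⟨p, ha⟩ := ha
  refine hext _ (isTwoSidedSub_idealGen {a}) (isHomogSub_idealGen_singleton 𝒜 ha) ?_
  exact (Submodule.ne_bot_iff _).mpr ⟨a, subset_idealGen {a} rfl, ha0⟩

variable [∀ n, FiniteDimensional k (𝒜 n)]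

theorem eq_zero_or_eq_zero_of_mul_mul_eq_zero_of_swap (hext : Extremal 𝒜)
    (ha : SetLike.IsHomogeneousElem 𝒜 a) (hb : SetLike.IsHomogeneousElem 𝒜 b)
    (hab : ∀ x, a * x * b = 0) (hba : ∀ x, b * x * a = 0) : a = 0 ∨ b = 0 := by
  by_contra! hne
  have hIlt := hext.hradius_lt_hradius_quotDim_idealGen ha hne.1
  have hJlt := hext.hradius_lt_hradius_quotDim_idealGen hb hne.2
  obtain ⟨p, ha⟩ := ha
  have hJa : ∀ z ∈ idealGen k {b}, z * a = 0 := fun z =>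
    mul_eq_zero_of_mem_idealGen_left (by simpa only [Set.mem_singleton_iff, forall_eq] using hba)
  have haJ : ∀ z ∈ idealGen k {b}, a * z = 0 := fun z =>
    mul_eq_zero_of_mem_idealGen_right (by simpa only [Set.mem_singleton_iff, forall_eq] using hab)
  exact (min_hradius_quotDim_le ha hJa haJ).not_gt (lt_min hIlt hJlt)

theorem mul_mul_eq_zero_swap (hext : Extremal 𝒜) (ha : SetLike.IsHomogeneousElem 𝒜 a)
    (hb : SetLike.IsHomogeneousElem 𝒜 b) (hab : ∀ x, a * x * b = 0) (x : A) : b * x * a = 0 := by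
  induction x using DirectSum.Decomposition.inductionOn 𝒜 with
  | zero => rw [mul_zero, zero_mul]
  | add x y hx hy => rw [mul_add, add_mul, hx, hy, add_zero]
  | homogeneous x =>
    have hc : SetLike.IsHomogeneousElem 𝒜 (b * x * a) := (hb.mul ⟨_, x.2⟩).mul ha
    have hcc (y : A) : b * x * a * y * (b * x * a) = 0 :=
      calc b * x * a * y * (b * x * a) = b * x * (a * y * b) * x * a := by simp only [mul_assoc]
        _ = 0 := by rw [hab, mul_zero, zero_mul, zero_mul]
    exact or_self_iff.mp (hext.eq_zero_or_eq_zero_of_mul_mul_eq_zero_of_swap hc hc hcc hcc)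

end Extremal


/-- **Theorem 5.4**: an extremal graded algebra is prime. -/
theorem stmt9 {k A : Type} [Field k] [Ring A] [Algebra k A]
    (𝒜 : ℕ → Submodule k A) [GradedAlgebra 𝒜]
    [hfd : ∀ n, FiniteDimensional k (𝒜 n)]
    (hext : Extremal 𝒜) :
    ∀ a b : A, (∀ x : A, a * x * b = 0) → a = 0 ∨ b = 0 := by
  refine fun a b => eq_zero_or_eq_zero_of_homogeneous 𝒜 fun a b ha hb hab => ?_
  have hba : ∀ x, b * x * a = 0 := hext.mul_mul_eq_zero_swap ha hb hab
  exact hext.eq_zero_or_eq_zero_of_mul_mul_eq_zero_of_swap ha hb hab hba
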